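/- For any K > 0 there are constants c, δ > 0 such that the following holds for all n ≥ 2. Suppose f : {0,1}^n → {0,1} satisfies max_{i∈[n]} I_i[f] ≤ K · var(f) · (log n)/n. Then Pr_x[√(s_f(x)) ≥ c · var(f) · √(log n)] ≥ δ · var(f). -/

import Mathlib

open Finset

noncomputable section

/-- Expectation over the uniform distribution on `{0,1}^n`. -/
def hcExp (n : ℕ) (g : (Fin n → Bool) → ℝ) : ℝ :=
  (∑ x : Fin n → Bool, g x) / 2 ^ n

/-- Flip the `i`-th coordinate of `x`. -/
def hcFlip {n : ℕ} (x : Fin n → Bool) (i : Fin n) : Fin n → Bool :=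
  Function.update x i (!(x i))

/-- Sensitivity of `f` at `x`. -/
def sens {n : ℕ} (f : (Fin n → Bool) → Bool) (x : Fin n → Bool) : ℕ :=
  (Finset.univ.filter fun i => f (hcFlip x i) ≠ f x).card

/-- `f` with values in `{0,1} ⊆ ℝ`. -/
def toReal {n : ℕ} (f : (Fin n → Bool) → Bool) : (Fin n → Bool) → ℝ :=
  fun x => if f x then 1 else 0

/-- Variance of a Boolean function. -/
def hcVar (n : ℕ) (f : (Fin n → Bool) → Bool) : ℝ :=
  hcExp n (toReal f) - (hcExp n (toReal f)) ^ 2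

/-- Influence of coordinate `i`. -/
def influence (n : ℕ) (f : (Fin n → Bool) → Bool) (i : Fin n) : ℝ :=
  hcExp n (fun x => if f (hcFlip x i) = f x then 0 else 1)

/-- Fourier character. -/
def chi {n : ℕ} (S : Finset (Fin n)) (x : Fin n → Bool) : ℝ :=
  ∏ i ∈ S, (if x i then (-1 : ℝ) else 1)

/-- Fourier coefficient of `g` at `S`. -/
def fcoef (n : ℕ) (g : (Fin n → Bool) → ℝ) (S : Finset (Fin n)) : ℝ :=
  hcExp n (fun x => g x * chi S x)

/-- Derivative of `g` along coordinate `i`. -/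
def derivOn {n : ℕ} (g : (Fin n → Bool) → ℝ) (i : Fin n) (x : Fin n → Bool) : ℝ :=
  g (Function.update x i false) - g (Function.update x i true)

/-- Euclidean norm of the gradient of `g` at `x`. -/
def gradNorm2 {n : ℕ} (g : (Fin n → Bool) → ℝ) (x : Fin n → Bool) : ℝ :=
  Real.sqrt (∑ i, (derivOn g i x) ^ 2)

/-- `ℓ_p` norm of the gradient of `g` at `x`. -/
def gradNormP {n : ℕ} (p : ℝ) (g : (Fin n → Bool) → ℝ) (x : Fin n → Bool) : ℝ :=
  (∑ i, |derivOn g i x| ^ p) ^ (1 / p)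

/-- Fourier weight at exactly level `d`. -/
def wEq (n : ℕ) (g : (Fin n → Bool) → ℝ) (d : ℕ) : ℝ :=
  ∑ S ∈ Finset.univ.filter (fun S : Finset (Fin n) => S.card = d), (fcoef n g S) ^ 2

/-- Approximate level-`d` Fourier weight: levels in `[d, 2d)`. -/
def wApprox (n : ℕ) (g : (Fin n → Bool) → ℝ) (d : ℕ) : ℝ :=
  ∑ S ∈ Finset.univ.filter (fun S : Finset (Fin n) => d ≤ S.card ∧ S.card < 2 * d),
    (fcoef n g S) ^ 2

/-- Fourier weight at levels `≥ d`. -/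
def wGe (n : ℕ) (g : (Fin n → Bool) → ℝ) (d : ℕ) : ℝ :=
  ∑ S ∈ Finset.univ.filter (fun S : Finset (Fin n) => d ≤ S.card), (fcoef n g S) ^ 2

/-!
Let `T_r` be the noise operator and `D_i` the derivative along coordinate `i`. Under the law of the
noisy copy of a point `x`, the centred coordinates are orthogonal with variance `1 - r ^ 2`, and the
numbers `T_r D_i f (x)` are, up to scaling, the coefficients of `f` along them. Bessel's inequality
therefore gives the pointwise bound `|∇ T_r f| ≤ 2 / √(1 - r ^ 2)` for every `f` with values in
`[-1, 1]`. Since `d/dr Stab_r[f] = ¼ ∑ i, E[D_i f · T_r D_i f]`, Cauchy–Schwarz in `i` and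
integration over `[r, 1]` yield `E[f ^ 2] - Stab_r[f] ≤ √(1 - r) · E[|∇f|]`, and `r = 1 - 1 / d`
shows that the Fourier weight of a Boolean `f` above level `d` is at most `2 E[√s_f] / √d`.

If all influences are at most `K var(f) log n / n`, hypercontractivity applied to the derivatives
makes the weight below level `d ≈ (log n) / 8` less than half of the variance, so that
`var(f) √(log n) ≲ E[√s_f]`. As `E[s_f]`, the second moment of `√s_f`, is the sum of the influences,
at most `K var(f) log n`, the Paley–Zygmund inequality turns this bound on the mean into the bound
on the tail.
-/

section

variable {n : ℕ}

lemma hcExp_mono {g h : (Fin n → Bool) → ℝ} (hgh : ∀ x, g x ≤ h x) : hcExp n g ≤ hcExp n h := by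
  unfold hcExp
  gcongr with x
  exact hgh x

lemma hcExp_nonneg {g : (Fin n → Bool) → ℝ} (hg : ∀ x, 0 ≤ g x) : 0 ≤ hcExp n g :=
  div_nonneg (sum_nonneg fun x _ => hg x) (by positivity)

lemma hcExp_const (c : ℝ) : hcExp n (fun _ => c) = c := by
  simp [hcExp]

lemma hcExp_add (g h : (Fin n → Bool) → ℝ) :
    hcExp n (fun x => g x + h x) = hcExp n g + hcExp n h := by
  simp only [hcExp, sum_add_distrib, add_div]

lemma hcExp_sub (g h : (Fin n → Bool) → ℝ) :
    hcExp n (fun x => g x - h x) = hcExp n g - hcExp n h := by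
  simp only [hcExp, sum_sub_distrib, sub_div]

lemma hcExp_const_mul (c : ℝ) (g : (Fin n → Bool) → ℝ) :
    hcExp n (fun x => c * g x) = c * hcExp n g := by
  simp only [hcExp, ← mul_sum, mul_div_assoc]

lemma hcExp_sum {ι : Type*} (s : Finset ι) (g : ι → (Fin n → Bool) → ℝ) :
    hcExp n (fun x => ∑ i ∈ s, g i x) = ∑ i ∈ s, hcExp n (g i) := by
  simp only [hcExp]
  rw [sum_comm, sum_div]

lemma hcExp_mul_sq_le (g h : (Fin n → Bool) → ℝ) :
    hcExp n (fun x => g x * h x) ^ 2 ≤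
      hcExp n (fun x => g x ^ 2) * hcExp n (fun x => h x ^ 2) := by
  unfold hcExp
  rw [div_pow, div_mul_div_comm, ← pow_two]
  gcongr
  exact sum_mul_sq_le_sq_mul_sq univ g h

lemma paley_zygmund {X : (Fin n → Bool) → ℝ} {θ : ℝ} (hθ : 0 ≤ θ) (hθX : θ ≤ hcExp n X) :
    (hcExp n X - θ) ^ 2 ≤
      hcExp n (fun x => X x ^ 2) * hcExp n (fun x => if θ ≤ X x then 1 else 0) := by
  set ind : (Fin n → Bool) → ℝ := fun x => if θ ≤ X x then 1 else 0 with ind_def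
  have ind_sq : ∀ x, ind x ^ 2 = ind x := fun x => by simp [ind_def]
  have tail : hcExp n X ≤ θ + hcExp n (fun x => X x * ind x) := by
    rw [← hcExp_const (n := n) θ, ← hcExp_add]
    refine hcExp_mono fun x => ?_
    by_cases h : θ ≤ X x
    · simpa [ind_def, h] using hθ
    · simpa [ind_def, h] using (not_le.1 h).le
  calc (hcExp n X - θ) ^ 2 ≤ hcExp n (fun x => X x * ind x) ^ 2 :=
        pow_le_pow_left₀ (by linarith) (by linarith) 2
    _ ≤ hcExp n (fun x => X x ^ 2) * hcExp n (fun x => ind x ^ 2) := hcExp_mul_sq_le X ind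
    _ = hcExp n (fun x => X x ^ 2) * hcExp n ind := by simp only [ind_sq]

lemma sq_le_mul_hcExp_tail {X : (Fin n → Bool) → ℝ} {θ M : ℝ} (hθ : 0 ≤ θ)
    (mean : 2 * θ ≤ hcExp n X) (second_moment : hcExp n (fun x => X x ^ 2) ≤ M) :
    θ ^ 2 ≤ M * hcExp n (fun x => if θ ≤ X x then 1 else 0) := by
  have tail_nonneg : 0 ≤ hcExp n (fun x => if θ ≤ X x then 1 else 0) :=
    hcExp_nonneg fun x => by split_ifs <;> norm_num
  calc θ ^ 2 ≤ (hcExp n X - θ) ^ 2 := by gcongr; linarith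
    _ ≤ hcExp n (fun x => X x ^ 2) * hcExp n (fun x => if θ ≤ X x then 1 else 0) :=
        paley_zygmund hθ (by linarith)
    _ ≤ M * hcExp n (fun x => if θ ≤ X x then 1 else 0) := by gcongr

lemma bessel_inequality {ι : Type*} [Fintype ι] [DecidableEq ι] {w : (Fin n → Bool) → ℝ}
    (hw : ∀ y, 0 ≤ w y) {φ : ι → (Fin n → Bool) → ℝ} {v : ℝ} (hv : 0 < v)
    (hφ : ∀ i j, hcExp n (fun y => w y * (φ i y * φ j y)) = if i = j then v else 0)
    (g : (Fin n → Bool) → ℝ) :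
    ∑ i, hcExp n (fun y => w y * (g y * φ i y)) ^ 2 ≤ v * hcExp n (fun y => w y * g y ^ 2) := by
  set t : ι → ℝ := fun i => hcExp n (fun y => w y * (g y * φ i y))
  set s : (Fin n → Bool) → ℝ := fun y => ∑ i, t i * φ i y with s_def
  have pairing : ∀ h : (Fin n → Bool) → ℝ, hcExp n (fun y => w y * (h y * s y)) =
      ∑ i, t i * hcExp n (fun y => w y * (h y * φ i y)) := fun h => by
    simp only [s_def, mul_sum, mul_left_comm _ (t _), hcExp_sum, hcExp_const_mul]
  have cross : hcExp n (fun y => w y * (g y * s y)) = ∑ i, t i ^ 2 := by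
    simp only [pairing, pow_two, t]
  have square : hcExp n (fun y => w y * (s y * s y)) = v * ∑ i, t i ^ 2 := by
    simp only [pairing s, mul_comm (s _) (φ _ _), pairing (φ _), hφ, mul_ite, mul_zero,
      sum_ite_eq, mem_univ, if_true, mul_sum]
    exact sum_congr rfl fun i _ => by ring
  have expand : hcExp n (fun y => w y * (v * g y - s y) ^ 2) =
      v * (v * hcExp n (fun y => w y * g y ^ 2) - ∑ i, t i ^ 2) := by
    calc hcExp n (fun y => w y * (v * g y - s y) ^ 2)
        = hcExp n (fun y => v ^ 2 * (w y * g y ^ 2) - 2 * v * (w y * (g y * s y)) +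
            w y * (s y * s y)) := by congr 1; ext y; ring
      _ = v ^ 2 * hcExp n (fun y => w y * g y ^ 2) - 2 * v * ∑ i, t i ^ 2 +
            v * ∑ i, t i ^ 2 := by
          simp only [hcExp_add, hcExp_sub, hcExp_const_mul, cross, square]
      _ = _ := by ring
  have nonneg : 0 ≤ hcExp n (fun y => w y * (v * g y - s y) ^ 2) :=
    hcExp_nonneg fun y => mul_nonneg (hw y) (sq_nonneg _)
  rw [expand] at nonneg
  linarith [nonneg_of_mul_nonneg_right nonneg hv]

lemma hcFlip_hcFlip (x : Fin n → Bool) (i : Fin n) : hcFlip (hcFlip x i) i = x := by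
  simp [hcFlip]

lemma hcExp_comp_hcFlip (i : Fin n) (g : (Fin n → Bool) → ℝ) :
    hcExp n (fun x => g (hcFlip x i)) = hcExp n g := by
  unfold hcExp
  congr 1
  exact Equiv.sum_comp (Function.Involutive.toPerm (hcFlip · i) (hcFlip_hcFlip · i)) g

lemma hcExp_eq_zero_of_odd (i : Fin n) {g : (Fin n → Bool) → ℝ}
    (hg : ∀ x, g (hcFlip x i) = -g x) : hcExp n g = 0 := by
  have flip_eq := hcExp_comp_hcFlip i g
  have neg_eq := hcExp_const_mul (-1) g
  simp only [hg] at flip_eq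
  simp only [neg_one_mul] at neg_eq
  linarith

lemma chi_empty (x : Fin n → Bool) : chi ∅ x = 1 :=
  prod_empty

lemma chi_insert {S : Finset (Fin n)} {i : Fin n} (hi : i ∉ S) (x : Fin n → Bool) :
    chi (insert i S) x = chi {i} x * chi S x := by
  simp only [chi, prod_insert hi, prod_singleton]

lemma chi_mul_self (S : Finset (Fin n)) (x : Fin n → Bool) : chi S x * chi S x = 1 := by
  simp only [chi, ← prod_mul_distrib]
  exact prod_eq_one fun i _ => by split_ifs <;> norm_num

lemma abs_chi (S : Finset (Fin n)) (x : Fin n → Bool) : |chi S x| = 1 := by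
  rcases mul_self_eq_one_iff.1 (chi_mul_self S x) with h | h <;> simp [h]

lemma chi_hcFlip_of_notMem {S : Finset (Fin n)} {i : Fin n} (hi : i ∉ S) (x : Fin n → Bool) :
    chi S (hcFlip x i) = chi S x :=
  prod_congr rfl fun j hj => by
    rw [hcFlip, Function.update_of_ne (ne_of_mem_of_not_mem hj hi)]

lemma chi_hcFlip_of_mem {S : Finset (Fin n)} {i : Fin n} (hi : i ∈ S) (x : Fin n → Bool) :
    chi S (hcFlip x i) = -chi S x := by
  have flip_singleton : chi {i} (hcFlip x i) = -chi {i} x := by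
    cases h : x i <;> simp [chi, hcFlip, h]
  rw [← insert_erase hi, chi_insert (notMem_erase i S), chi_insert (notMem_erase i S),
    chi_hcFlip_of_notMem (notMem_erase i S), flip_singleton, neg_mul]

lemma hcExp_chi_mul_chi (S T : Finset (Fin n)) :
    hcExp n (fun x => chi S x * chi T x) = if S = T then 1 else 0 := by
  split_ifs with h
  · simp only [h, chi_mul_self, hcExp_const]
  · obtain ⟨i, hi⟩ : ∃ i, ¬(i ∈ S ↔ i ∈ T) := by
      by_contra! hST
      exact h (ext hST)
    refine hcExp_eq_zero_of_odd i fun x => ?_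
    by_cases hS : i ∈ S
    · have hT : i ∉ T := fun hT => hi (iff_of_true hS hT)
      rw [chi_hcFlip_of_mem hS, chi_hcFlip_of_notMem hT, neg_mul]
    · have hT : i ∈ T := by_contra fun hT => hi (iff_of_false hS hT)
      rw [chi_hcFlip_of_notMem hS, chi_hcFlip_of_mem hT, mul_neg]

lemma derivOn_eq (g : (Fin n → Bool) → ℝ) (i : Fin n) (x : Fin n → Bool) :
    derivOn g i x = chi {i} x * (g x - g (hcFlip x i)) := by
  have update_self : Function.update x i (x i) = x := Function.update_eq_self i x
  cases h : x i <;> rw [h] at update_self <;> simp [derivOn, chi, hcFlip, h, update_self]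

lemma derivOn_hcFlip (g : (Fin n → Bool) → ℝ) (i : Fin n) (x : Fin n → Bool) :
    derivOn g i (hcFlip x i) = derivOn g i x := by
  simp [derivOn, hcFlip]

lemma fcoef_derivOn (g : (Fin n → Bool) → ℝ) (i : Fin n) (T : Finset (Fin n)) :
    fcoef n (derivOn g i) T = if i ∈ T then 0 else 2 * fcoef n g (insert i T) := by
  split_ifs with hi
  · refine hcExp_eq_zero_of_odd i fun x => ?_
    rw [derivOn_hcFlip, chi_hcFlip_of_mem hi, mul_neg]
  · set G : (Fin n → Bool) → ℝ := fun x => g x * chi (insert i T) x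
    have symmetrize : ∀ x, derivOn g i x * chi T x = G x + G (hcFlip x i) := fun x => by
      simp only [G, derivOn_eq, chi_hcFlip_of_mem (mem_insert_self i T)]
      rw [chi_insert hi]
      ring
    simp only [fcoef, symmetrize, hcExp_add, hcExp_comp_hcFlip]
    exact (two_mul _).symm

/-- The density, with respect to the uniform distribution, of a random point `y` whose coordinates
are independent and `r`-correlated with those of `x`. -/
def noiseKernel (r : ℝ) (x y : Fin n → Bool) : ℝ :=
  ∏ i, (1 + r * (chi {i} x * chi {i} y))

/-- The noise operator `T_r`: averaging over `r`-correlated copies of the argument. -/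
def noise (r : ℝ) (g : (Fin n → Bool) → ℝ) (x : Fin n → Bool) : ℝ :=
  hcExp n (fun y => noiseKernel r x y * g y)

/-- The noise stability `Stab_r[g] = E[g · T_r g]`. -/
def noiseStability (r : ℝ) (g : (Fin n → Bool) → ℝ) : ℝ :=
  hcExp n (fun x => g x * noise r g x)

lemma noiseKernel_nonneg {r : ℝ} (hr : |r| ≤ 1) (x y : Fin n → Bool) : 0 ≤ noiseKernel r x y := by
  refine prod_nonneg fun i _ => ?_
  have : |r * (chi {i} x * chi {i} y)| ≤ 1 := by simpa only [abs_mul, abs_chi, mul_one] using hr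
  linarith [neg_le_of_abs_le this]

lemma noiseKernel_eq_sum (r : ℝ) (x y : Fin n → Bool) :
    noiseKernel r x y = ∑ S : Finset (Fin n), r ^ S.card * (chi S x * chi S y) := by
  simp only [noiseKernel, prod_one_add, powerset_univ, prod_mul_distrib, prod_const, chi,
    prod_singleton]

lemma noiseKernel_one (x y : Fin n → Bool) : noiseKernel 1 x y = if x = y then 2 ^ n else 0 := by
  split_ifs with h
  · simp only [h, noiseKernel, chi_mul_self]
    norm_num
  · obtain ⟨i, hi⟩ : ∃ i, x i ≠ y i := Function.ne_iff.1 h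
    refine prod_eq_zero (mem_univ i) ?_
    cases hx : x i <;> cases hy : y i <;> simp_all [chi]

lemma noise_one (g : (Fin n → Bool) → ℝ) : noise 1 g = g := by
  ext x
  simp [noise, noiseKernel_one, hcExp]

lemma noise_eq_sum (r : ℝ) (g : (Fin n → Bool) → ℝ) (x : Fin n → Bool) :
    noise r g x = ∑ S : Finset (Fin n), r ^ S.card * fcoef n g S * chi S x := by
  simp only [noise, noiseKernel_eq_sum, sum_mul, hcExp_sum]
  refine sum_congr rfl fun S _ => ?_
  rw [fcoef, mul_right_comm, ← hcExp_const_mul]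
  congr 1; ext y; ring

lemma sum_fcoef_mul_chi (g : (Fin n → Bool) → ℝ) (x : Fin n → Bool) :
    ∑ S : Finset (Fin n), fcoef n g S * chi S x = g x := by
  simpa only [noise_one, one_pow, one_mul] using (noise_eq_sum 1 g x).symm

lemma noise_chi (r : ℝ) (S : Finset (Fin n)) (x : Fin n → Bool) :
    noise r (chi S) x = r ^ S.card * chi S x := by
  simp [noise_eq_sum, fcoef, hcExp_chi_mul_chi]

lemma fcoef_noise (r : ℝ) (g : (Fin n → Bool) → ℝ) (S : Finset (Fin n)) :
    fcoef n (noise r g) S = r ^ S.card * fcoef n g S := by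
  unfold fcoef
  simp only [noise_eq_sum, sum_mul, mul_assoc, hcExp_sum, hcExp_const_mul, hcExp_chi_mul_chi]
  simp [fcoef]

lemma noise_noise (r s : ℝ) (g : (Fin n → Bool) → ℝ) : noise r (noise s g) = noise (r * s) g := by
  ext x
  simp only [noise_eq_sum r, noise_eq_sum (r * s), fcoef_noise, mul_pow, mul_assoc]

lemma plancherel (g h : (Fin n → Bool) → ℝ) :
    hcExp n (fun x => g x * h x) = ∑ S : Finset (Fin n), fcoef n g S * fcoef n h S := by
  conv_lhs => simp only [← sum_fcoef_mul_chi h, mul_sum, mul_left_comm _ (fcoef n h _)]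
  simp only [hcExp_sum, hcExp_const_mul]
  exact sum_congr rfl fun S _ => mul_comm _ _

lemma noiseStability_eq_sum (r : ℝ) (g : (Fin n → Bool) → ℝ) :
    noiseStability r g = ∑ S : Finset (Fin n), r ^ S.card * fcoef n g S ^ 2 := by
  rw [noiseStability, plancherel]
  exact sum_congr rfl fun S _ => by rw [fcoef_noise]; ring

lemma noiseStability_one (g : (Fin n → Bool) → ℝ) :
    noiseStability 1 g = hcExp n (fun x => g x ^ 2) := by
  simp only [noiseStability, noise_one, pow_two]

lemma parseval (g : (Fin n → Bool) → ℝ) :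
    hcExp n (fun x => g x ^ 2) = ∑ S : Finset (Fin n), fcoef n g S ^ 2 := by
  simpa only [noiseStability_one, one_pow, one_mul] using noiseStability_eq_sum 1 g

lemma hcExp_noise_sq (r : ℝ) (g : (Fin n → Bool) → ℝ) :
    hcExp n (fun x => noise r g x ^ 2) = noiseStability (r ^ 2) g := by
  rw [noiseStability_eq_sum]
  simp only [pow_two (noise r g _), plancherel, fcoef_noise]
  exact sum_congr rfl fun S _ => by ring

lemma noiseStability_nonneg {r : ℝ} (hr : 0 ≤ r) (g : (Fin n → Bool) → ℝ) :
    0 ≤ noiseStability r g := by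
  rw [noiseStability_eq_sum]
  positivity

lemma noiseStability_derivOn (r : ℝ) (g : (Fin n → Bool) → ℝ) (i : Fin n) :
    noiseStability r (derivOn g i) =
      4 * ∑ S : Finset (Fin n) with i ∈ S, r ^ (S.card - 1) * fcoef n g S ^ 2 := by
  calc noiseStability r (derivOn g i)
      = ∑ T : Finset (Fin n) with i ∉ T, r ^ T.card * (2 * fcoef n g (insert i T)) ^ 2 := by
        rw [noiseStability_eq_sum, sum_filter]
        exact sum_congr rfl fun T _ => by rw [fcoef_derivOn]; split_ifs <;> simp_all
    _ = ∑ S : Finset (Fin n) with i ∈ S, r ^ (S.card - 1) * (2 * fcoef n g S) ^ 2 := by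
        refine sum_nbij' (insert i) (·.erase i) ?_ ?_ ?_ ?_ ?_ <;> intro T hT <;>
          have hT := (mem_filter.1 hT).2
        · simp
        · simp
        · exact erase_insert hT
        · exact insert_erase hT
        · rw [card_insert_of_notMem hT, Nat.add_sub_cancel]
    _ = _ := by
        rw [mul_sum]
        exact sum_congr rfl fun S _ => by ring

lemma sum_noiseStability_derivOn (r : ℝ) (g : (Fin n → Bool) → ℝ) :
    ∑ i, noiseStability r (derivOn g i) =
      4 * ∑ S : Finset (Fin n), S.card * r ^ (S.card - 1) * fcoef n g S ^ 2 := by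
  simp only [noiseStability_derivOn, sum_filter, ← mul_sum]
  rw [sum_comm]
  simp [mul_assoc]

lemma hasDerivAt_noiseStability (r : ℝ) (g : (Fin n → Bool) → ℝ) :
    HasDerivAt (noiseStability · g) ((∑ i, noiseStability r (derivOn g i)) / 4) r := by
  rw [sum_noiseStability_derivOn, mul_div_cancel_left₀ _ four_ne_zero]
  simp only [noiseStability_eq_sum]
  exact HasDerivAt.fun_sum fun S _ => (hasDerivAt_pow _ _).mul_const _

lemma noiseKernel_eq_mul_prod_erase (r : ℝ) (x y : Fin n → Bool) (i : Fin n) :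
    noiseKernel r x y = (1 + r * (chi {i} x * chi {i} y)) *
      ∏ j ∈ univ.erase i, (1 + r * (chi {j} x * chi {j} y)) :=
  (mul_prod_erase univ _ (mem_univ i)).symm

lemma two_mul_hcExp_noiseKernel_mul_sub (r : ℝ) (g : (Fin n → Bool) → ℝ) (i : Fin n)
    (x : Fin n → Bool) :
    2 * hcExp n (fun y => noiseKernel r x y * (g y * (chi {i} y - r * chi {i} x))) =
      (1 - r ^ 2) * noise r (derivOn g i) x := by
  set k : (Fin n → Bool) → ℝ := fun y => ∏ j ∈ univ.erase i, (1 + r * (chi {j} x * chi {j} y))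
  have k_flip : ∀ y, k (hcFlip y i) = k y := fun y => prod_congr rfl fun j hj => by
    rw [chi_hcFlip_of_notMem (by simpa using (ne_of_mem_erase hj).symm)]
  have chi_flip : ∀ y, chi {i} (hcFlip y i) = -chi {i} y :=
    chi_hcFlip_of_mem (mem_singleton_self i)
  set G : (Fin n → Bool) → ℝ := fun y => chi {i} y * g y * k y with G_def
  have recentre : ∀ y, noiseKernel r x y * (g y * (chi {i} y - r * chi {i} x)) =
      (1 - r ^ 2) * G y := fun y => by
    rw [noiseKernel_eq_mul_prod_erase r x y i]
    change (1 + _) * k y * _ = _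
    linear_combination k y * g y * (r * chi {i} x * chi_mul_self {i} y -
      r ^ 2 * chi {i} y * chi_mul_self {i} x)
  have symmetrize : ∀ y, k y * derivOn g i y = G y + G (hcFlip y i) := fun y => by
    simp only [G_def, derivOn_eq, k_flip, chi_flip]
    ring
  have odd_part : hcExp n (fun y => chi {i} y * (k y * derivOn g i y)) = 0 :=
    hcExp_eq_zero_of_odd i fun y => by rw [chi_flip, k_flip, derivOn_hcFlip, neg_mul]
  have noise_eq : noise r (derivOn g i) x = hcExp n (fun y => k y * derivOn g i y) := by
    calc noise r (derivOn g i) x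
        = hcExp n (fun y => k y * derivOn g i y +
            r * chi {i} x * (chi {i} y * (k y * derivOn g i y))) := by
          simp only [noise, noiseKernel_eq_mul_prod_erase r x _ i]
          congr 1; ext y; ring
      _ = _ := by rw [hcExp_add, hcExp_const_mul, odd_part, mul_zero, add_zero]
  simp only [recentre, hcExp_const_mul, noise_eq, symmetrize, hcExp_add, hcExp_comp_hcFlip]
  ring

lemma hcExp_noiseKernel (r : ℝ) (x : Fin n → Bool) : hcExp n (noiseKernel r x) = 1 := by
  simpa [noise, chi_empty] using noise_chi r ∅ x

lemma hcExp_noiseKernel_mul_sub_mul_sub (r : ℝ) (x : Fin n → Bool) (i j : Fin n) :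
    hcExp n (fun y => noiseKernel r x y *
      ((chi {i} y - r * chi {i} x) * (chi {j} y - r * chi {j} x))) =
      if i = j then 1 - r ^ 2 else 0 := by
  have first_moment : ∀ i, hcExp n (fun y => noiseKernel r x y * chi {i} y) = r * chi {i} x :=
    fun i => by simpa [noise] using noise_chi r {i} x
  have second_moment : hcExp n (fun y => noiseKernel r x y * (chi {i} y * chi {j} y)) =
      if i = j then 1 else r ^ 2 * (chi {i} x * chi {j} x) := by
    split_ifs with h
    · simp only [h, chi_mul_self, mul_one, hcExp_noiseKernel]
    · have hi : i ∉ ({j} : Finset (Fin n)) := notMem_singleton.2 h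
      simpa [noise, chi_insert hi, card_insert_of_notMem hi] using noise_chi r {i, j} x
  calc hcExp n (fun y => noiseKernel r x y *
        ((chi {i} y - r * chi {i} x) * (chi {j} y - r * chi {j} x)))
      = hcExp n (fun y => noiseKernel r x y * (chi {i} y * chi {j} y) -
          r * chi {i} x * (noiseKernel r x y * chi {j} y) -
          r * chi {j} x * (noiseKernel r x y * chi {i} y) +
          r ^ 2 * (chi {i} x * chi {j} x) * noiseKernel r x y) := by
        congr 1; ext y; ring
    _ = (if i = j then 1 else r ^ 2 * (chi {i} x * chi {j} x)) -
          r ^ 2 * (chi {i} x * chi {j} x) := by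
        simp only [hcExp_add, hcExp_sub, hcExp_const_mul, first_moment, second_moment]
        rw [hcExp_noiseKernel]
        ring
    _ = if i = j then 1 - r ^ 2 else 0 := by
        split_ifs with h
        · rw [h, chi_mul_self, mul_one]
        · ring

-- Under the law of the noisy copy of `x`, the variables `chi {i} y - r * chi {i} x` are orthogonal
-- of variance `1 - r ^ 2`, and the derivatives of `T_r g` are the coefficients of `g` along them.
lemma sum_noise_derivOn_sq_le {r : ℝ} (hr : |r| < 1) (g : (Fin n → Bool) → ℝ)
    (x : Fin n → Bool) :
    ∑ i, noise r (derivOn g i) x ^ 2 ≤ 4 / (1 - r ^ 2) * noise r (fun y => g y ^ 2) x := by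
  have hv : 0 < 1 - r ^ 2 := sub_pos.2 ((sq_lt_one_iff_abs_lt_one r).2 hr)
  have bessel := bessel_inequality (noiseKernel_nonneg hr.le x) hv
    (hcExp_noiseKernel_mul_sub_mul_sub r x) g
  have coeff : ∀ i, hcExp n (fun y => noiseKernel r x y * (g y * (chi {i} y - r * chi {i} x))) =
      (1 - r ^ 2) / 2 * noise r (derivOn g i) x := fun i => by
    linarith [two_mul_hcExp_noiseKernel_mul_sub r g i x]
  simp only [coeff, mul_pow, ← mul_sum] at bessel
  rw [div_mul_eq_mul_div, le_div_iff₀ hv]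
  refine le_of_mul_le_mul_left ?_ hv
  rw [noise]
  linarith

lemma noise_le_one {r : ℝ} (hr : |r| ≤ 1) {g : (Fin n → Bool) → ℝ} (hg : ∀ x, g x ≤ 1)
    (x : Fin n → Bool) : noise r g x ≤ 1 :=
  calc noise r g x ≤ hcExp n (noiseKernel r x) :=
        hcExp_mono fun y => mul_le_of_le_one_right (noiseKernel_nonneg hr x y) (hg y)
    _ = 1 := hcExp_noiseKernel r x

lemma sum_noiseStability_derivOn_le {r : ℝ} (hr₀ : 0 ≤ r) (hr₁ : r < 1)
    {g : (Fin n → Bool) → ℝ} (hg : ∀ x, |g x| ≤ 1) :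
    ∑ i, noiseStability r (derivOn g i) ≤ 2 / √(1 - r) * hcExp n (gradNorm2 g) := by
  have hr : |r| < 1 := abs_lt.2 ⟨by linarith, hr₁⟩
  have grad_noise_le : ∀ x, √(∑ i, noise r (derivOn g i) x ^ 2) ≤ 2 / √(1 - r) := fun x => by
    refine Real.sqrt_le_iff.2 ⟨by positivity, ?_⟩
    calc ∑ i, noise r (derivOn g i) x ^ 2
        ≤ 4 / (1 - r ^ 2) * noise r (fun y => g y ^ 2) x := sum_noise_derivOn_sq_le hr g x
      _ ≤ 4 / (1 - r ^ 2) := mul_le_of_le_one_right (div_nonneg zero_le_four (by nlinarith))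
          (noise_le_one hr.le (fun y => (sq_le_one_iff_abs_le_one _).2 (hg y)) x)
      _ ≤ 4 / (1 - r) := by
          gcongr
          nlinarith
      _ = (2 / √(1 - r)) ^ 2 := by
          rw [div_pow, Real.sq_sqrt (by linarith)]
          norm_num
  simp only [noiseStability, ← hcExp_sum, ← hcExp_const_mul]
  refine hcExp_mono fun x => ?_
  calc ∑ i, derivOn g i x * noise r (derivOn g i) x
      ≤ gradNorm2 g x * √(∑ i, noise r (derivOn g i) x ^ 2) := Real.sum_mul_le_sqrt_mul_sqrt _ _ _
    _ ≤ gradNorm2 g x * (2 / √(1 - r)) :=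
        mul_le_mul_of_nonneg_left (grad_noise_le x) (Real.sqrt_nonneg _)
    _ = 2 / √(1 - r) * gradNorm2 g x := mul_comm _ _

lemma hcExp_sq_sub_noiseStability_le {r : ℝ} (hr₀ : 0 ≤ r) (hr₁ : r ≤ 1)
    {g : (Fin n → Bool) → ℝ} (hg : ∀ x, |g x| ≤ 1) :
    hcExp n (fun x => g x ^ 2) - noiseStability r g ≤ √(1 - r) * hcExp n (gradNorm2 g) := by
  set A := hcExp n (gradNorm2 g)
  set F : ℝ → ℝ := fun s => -noiseStability s g - √(1 - s) * A
  have hasDerivAt_F : ∀ s < 1, HasDerivAt F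
      (-((∑ i, noiseStability s (derivOn g i)) / 4) - -1 / (2 * √(1 - s)) * A) s := fun s hs =>
    (hasDerivAt_noiseStability s g).neg.sub
      ((((hasDerivAt_id s).const_sub 1).sqrt (sub_pos.2 hs).ne').mul_const A)
  have monotone_F : MonotoneOn F (Set.Icc 0 1) := by
    refine monotoneOn_of_deriv_nonneg (convex_Icc 0 1) ?_ ?_ ?_
    · have : Continuous (noiseStability · g) :=
        continuous_iff_continuousAt.2 fun s => (hasDerivAt_noiseStability s g).continuousAt
      fun_prop
    all_goals
      intro s hs
      rw [interior_Icc] at hs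
    · exact (hasDerivAt_F s hs.2).differentiableAt.differentiableWithinAt
    · have bound := sum_noiseStability_derivOn_le hs.1.le hs.2 hg
      have : 2 / √(1 - s) * A = 4 * (1 / (2 * √(1 - s)) * A) := by ring
      rw [(hasDerivAt_F s hs.2).deriv, neg_div, neg_mul]
      linarith
  have endpoints : F r ≤ F 1 := monotone_F ⟨hr₀, hr₁⟩ (Set.right_mem_Icc.2 zero_le_one) hr₁
  simp only [F, noiseStability_one, sub_self, Real.sqrt_zero, zero_mul, sub_zero] at endpoints
  linarith

lemma one_sub_one_div_pow_le_half {d k : ℕ} (hd : 1 ≤ d) (hdk : d ≤ k) :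
    (1 - 1 / (d : ℝ)) ^ k ≤ 1 / 2 := by
  have hd' : (1 : ℝ) ≤ d := mod_cast hd
  have hbase : 0 ≤ 1 - 1 / (d : ℝ) := sub_nonneg.2 ((div_le_one (by linarith)).2 hd')
  calc (1 - 1 / (d : ℝ)) ^ k ≤ (1 - 1 / (d : ℝ)) ^ d :=
        pow_le_pow_of_le_one hbase (sub_le_self _ (by positivity)) hdk
    _ ≤ Real.exp (-1) := Real.one_sub_div_pow_le_exp_neg hd'
    _ ≤ 1 / 2 := by
        rw [Real.exp_neg, one_div]
        gcongr
        linarith [Real.add_one_le_exp (1 : ℝ)]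

lemma wGe_le {g : (Fin n → Bool) → ℝ} (hg : ∀ x, |g x| ≤ 1) {d : ℕ} (hd : 1 ≤ d) :
    wGe n g d ≤ 2 * hcExp n (gradNorm2 g) / √d := by
  set r : ℝ := 1 - 1 / d with r_def
  have hr₀ : 0 ≤ r := sub_nonneg.2 (div_le_self zero_le_one (mod_cast hd))
  have hr₁ : r ≤ 1 := sub_le_self _ (by positivity)
  calc wGe n g d
      ≤ ∑ S : Finset (Fin n) with d ≤ S.card, 2 * ((1 - r ^ S.card) * fcoef n g S ^ 2) := by
        refine sum_le_sum fun S hS => ?_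
        have half := one_sub_one_div_pow_le_half hd (mem_filter.1 hS).2
        nlinarith [sq_nonneg (fcoef n g S)]
    _ ≤ ∑ S : Finset (Fin n), 2 * ((1 - r ^ S.card) * fcoef n g S ^ 2) :=
        sum_le_univ_sum_of_nonneg fun S =>
          mul_nonneg zero_le_two (mul_nonneg (sub_nonneg.2 (pow_le_one₀ hr₀ hr₁)) (sq_nonneg _))
    _ = 2 * (hcExp n (fun x => g x ^ 2) - noiseStability r g) := by
        rw [← noiseStability_one, noiseStability_eq_sum, noiseStability_eq_sum,
          ← sum_sub_distrib, mul_sum]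
        exact sum_congr rfl fun S _ => by ring
    _ ≤ 2 * (√(1 - r) * hcExp n (gradNorm2 g)) := by
        gcongr
        exact hcExp_sq_sub_noiseStability_le hr₀ hr₁ hg
    _ = 2 * hcExp n (gradNorm2 g) / √d := by
        rw [r_def, sub_sub_cancel, Real.sqrt_div zero_le_one, Real.sqrt_one]
        ring

lemma hcExp_add_chi_mul_pow_four (i : Fin n) (r : ℝ) {P Q : (Fin n → Bool) → ℝ}
    (hP : ∀ x, P (hcFlip x i) = P x) (hQ : ∀ x, Q (hcFlip x i) = Q x) :
    hcExp n (fun x => (P x + r * (chi {i} x * Q x)) ^ 4) =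
      hcExp n (fun x => P x ^ 4) + 6 * r ^ 2 * hcExp n (fun x => P x ^ 2 * Q x ^ 2) +
        r ^ 4 * hcExp n (fun x => Q x ^ 4) := by
  set R : (Fin n → Bool) → ℝ := fun x => 4 * r * P x ^ 3 * Q x + 4 * r ^ 3 * P x * Q x ^ 3
  have R_flip : ∀ x, R (hcFlip x i) = R x := fun x => by simp only [R, hP, hQ]
  have odd_part : hcExp n (fun x => chi {i} x * R x) = 0 := hcExp_eq_zero_of_odd i fun x => by
    rw [R_flip, chi_hcFlip_of_mem (mem_singleton_self i), neg_mul]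
  have expand : ∀ x, (P x + r * (chi {i} x * Q x)) ^ 4 =
      P x ^ 4 + 6 * r ^ 2 * (P x ^ 2 * Q x ^ 2) + r ^ 4 * Q x ^ 4 + chi {i} x * R x := fun x => by
    linear_combination (6 * r ^ 2 * P x ^ 2 * Q x ^ 2 + 4 * r ^ 3 * chi {i} x * P x * Q x ^ 3 +
      r ^ 4 * Q x ^ 4 * (chi {i} x ^ 2 + 1)) * chi_mul_self {i} x
  simp only [expand, hcExp_add, hcExp_const_mul, odd_part, add_zero]

lemma hcExp_sq_mul_sq_le {P Q : (Fin n → Bool) → ℝ} {p q : ℝ} (hp : 0 ≤ p) (hq : 0 ≤ q)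
    (hP : hcExp n (fun x => P x ^ 4) ≤ p ^ 2) (hQ : hcExp n (fun x => Q x ^ 4) ≤ q ^ 2) :
    hcExp n (fun x => P x ^ 2 * Q x ^ 2) ≤ p * q := by
  refine le_of_pow_le_pow_left₀ two_ne_zero (by positivity) ?_
  calc hcExp n (fun x => P x ^ 2 * Q x ^ 2) ^ 2
      ≤ hcExp n (fun x => (P x ^ 2) ^ 2) * hcExp n (fun x => (Q x ^ 2) ^ 2) :=
        hcExp_mul_sq_le _ _
    _ ≤ p ^ 2 * q ^ 2 := by
        simp only [← pow_mul]
        exact mul_le_mul hP hQ (hcExp_nonneg fun x => (even_two_mul 2).pow_nonneg _)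
          (by positivity)
    _ = (p * q) ^ 2 := (mul_pow p q 2).symm

lemma hcExp_noise_sum_pow_four_le {r : ℝ} (hr : 3 * r ^ 2 ≤ 1) (J : Finset (Fin n)) :
    ∀ b : Finset (Fin n) → ℝ,
      hcExp n (fun x => (∑ S ∈ J.powerset, r ^ S.card * b S * chi S x) ^ 4) ≤
        (∑ S ∈ J.powerset, b S ^ 2) ^ 2 := by
  induction J using Finset.induction_on with
  | empty => simp [chi_empty, hcExp_const, ← pow_mul]
  | insert j J hj ih =>
    intro b
    set P : (Fin n → Bool) → ℝ := fun x => ∑ S ∈ J.powerset, r ^ S.card * b S * chi S x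
    set Q : (Fin n → Bool) → ℝ :=
      fun x => ∑ S ∈ J.powerset, r ^ S.card * b (insert j S) * chi S x with Q_def
    set p := ∑ S ∈ J.powerset, b S ^ 2
    set q := ∑ S ∈ J.powerset, b (insert j S) ^ 2
    have notMem : ∀ S ∈ J.powerset, j ∉ S := fun S hS h => hj (mem_powerset.1 hS h)
    have hP : hcExp n (fun x => P x ^ 4) ≤ p ^ 2 := ih b
    have hQ : hcExp n (fun x => Q x ^ 4) ≤ q ^ 2 := ih fun S => b (insert j S)
    have P_flip : ∀ x, P (hcFlip x j) = P x := fun x =>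
      sum_congr rfl fun S hS => by rw [chi_hcFlip_of_notMem (notMem S hS)]
    have Q_flip : ∀ x, Q (hcFlip x j) = Q x := fun x =>
      sum_congr rfl fun S hS => by rw [chi_hcFlip_of_notMem (notMem S hS)]
    have split : ∀ x, ∑ S ∈ (insert j J).powerset, r ^ S.card * b S * chi S x =
        P x + r * (chi {j} x * Q x) := fun x => by
      simp only [sum_powerset_insert hj, Q_def, mul_sum]
      refine congrArg (P x + ·) (sum_congr rfl fun S hS => ?_)
      rw [card_insert_of_notMem (notMem S hS), chi_insert (notMem S hS)]
      ring
    have hPQ : hcExp n (fun x => P x ^ 2 * Q x ^ 2) ≤ p * q :=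
      hcExp_sq_mul_sq_le (by positivity) (by positivity) hP hQ
    simp only [split, hcExp_add_chi_mul_pow_four j r P_flip Q_flip, sum_powerset_insert hj]
    calc _ ≤ p ^ 2 + 6 * r ^ 2 * (p * q) + r ^ 4 * q ^ 2 := by gcongr
      _ ≤ p ^ 2 + 2 * (p * q) + 1 * q ^ 2 := by
          gcongr
          · linarith
          · nlinarith [sq_nonneg r]
      _ = (p + q) ^ 2 := by ring

lemma hcExp_noise_pow_four_le {r : ℝ} (hr : 3 * r ^ 2 ≤ 1) (g : (Fin n → Bool) → ℝ) :
    hcExp n (fun x => noise r g x ^ 4) ≤ hcExp n (fun x => g x ^ 2) ^ 2 := by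
  simpa only [powerset_univ, ← noise_eq_sum, parseval] using
    hcExp_noise_sum_pow_four_le hr univ (fcoef n g)

-- The `(4/3, 2)`-hypercontractive estimate, obtained by duality from the `(2, 4)` one.
lemma noiseStability_third_le {g : (Fin n → Bool) → ℝ} (hg : ∀ x, g x ^ 3 = g x) :
    noiseStability (1 / 3) g ≤ hcExp n (fun x => g x ^ 2) * √(hcExp n (fun x => g x ^ 2)) := by
  set p := hcExp n (fun x => g x ^ 2) with p_def
  set q := noiseStability (1 / 3) g with q_def
  set h := noise (1 / 3) g
  have hp : 0 ≤ p := hcExp_nonneg fun x => sq_nonneg _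
  have hq : 0 ≤ q := noiseStability_nonneg (by norm_num) g
  have fourth_moment : hcExp n (fun x => h x ^ 4) ≤ q ^ 2 := by
    have hr : √(1 / 3 : ℝ) ^ 2 = 1 / 3 := Real.sq_sqrt (by norm_num)
    have := hcExp_noise_pow_four_le (r := √(1 / 3)) (by rw [hr]; norm_num) (noise √(1 / 3) g)
    rwa [noise_noise, hcExp_noise_sq, ← pow_two, hr] at this
  have restricted : hcExp n (fun x => g x ^ 2 * h x ^ 2) ^ 2 ≤ p * q ^ 2 := by
    refine (hcExp_mul_sq_le _ _).trans ?_
    have g_sq_sq : ∀ x, (g x ^ 2) ^ 2 = g x ^ 2 := fun x => by linear_combination g x * hg x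
    simp only [g_sq_sq, ← pow_mul, ← p_def]
    gcongr
  have pairing : q ^ 2 ≤ p * hcExp n (fun x => g x ^ 2 * h x ^ 2) := by
    calc q ^ 2 = hcExp n (fun x => g x * (g x ^ 2 * h x)) ^ 2 := by
          rw [q_def, noiseStability]
          congr 2; ext x; linear_combination -h x * hg x
      _ ≤ p * hcExp n (fun x => (g x ^ 2 * h x) ^ 2) := hcExp_mul_sq_le _ _
      _ = _ := by
          congr 2; ext x; linear_combination g x * h x ^ 2 * hg x
  have q_sq_le : q ^ 2 ≤ p ^ 3 := by
    rcases hq.eq_or_lt with hq | hq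
    · rw [← hq, zero_pow two_ne_zero]; positivity
    · refine le_of_mul_le_mul_right ?_ (pow_pos hq 2)
      calc q ^ 2 * q ^ 2 = (q ^ 2) ^ 2 := (pow_two _).symm
        _ ≤ (p * hcExp n (fun x => g x ^ 2 * h x ^ 2)) ^ 2 := by gcongr
        _ ≤ p ^ 2 * (p * q ^ 2) := by rw [mul_pow]; gcongr
        _ = p ^ 3 * q ^ 2 := by ring
  refine le_of_pow_le_pow_left₀ two_ne_zero (by positivity) ?_
  rw [mul_pow, Real.sq_sqrt hp]
  linarith

lemma wGe_one_le (g : (Fin n → Bool) → ℝ) (d : ℕ) :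
    wGe n g 1 ≤ wGe n g d + 3 ^ d / 4 * ∑ i, noiseStability (1 / 3) (derivOn g i) := by
  have low_degree : ∀ S : Finset (Fin n), 1 ≤ S.card → S.card < d →
      1 ≤ (3 : ℝ) ^ d * (S.card * (1 / 3) ^ (S.card - 1)) := fun S hS hSd => by
    calc (1 : ℝ) = 3 ^ (S.card - 1) * (1 * (1 / 3) ^ (S.card - 1)) := by
          rw [one_mul, ← mul_pow]; norm_num
      _ ≤ 3 ^ d * (S.card * (1 / 3) ^ (S.card - 1)) := by
          gcongr
          · norm_num
          · omega
          · exact mod_cast hS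
  rw [sum_noiseStability_derivOn, ← mul_assoc, div_mul_cancel₀ _ four_ne_zero, mul_sum, wGe, wGe,
    sum_filter, sum_filter, ← sum_add_distrib]
  refine sum_le_sum fun S _ => ?_
  have high_nonneg : 0 ≤ 3 ^ d * (S.card * (1 / 3) ^ (S.card - 1) * fcoef n g S ^ 2) := by
    positivity
  split_ifs with h1 hd hd
  · linarith
  · nlinarith [low_degree S h1 (not_le.1 hd), sq_nonneg (fcoef n g S)]
  · nlinarith [sq_nonneg (fcoef n g S)]
  · linarith

lemma abs_toReal_le_one (f : (Fin n → Bool) → Bool) (x : Fin n → Bool) : |toReal f x| ≤ 1 := by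
  cases h : f x <;> simp [toReal, h]

lemma hcVar_eq_wGe_one (f : (Fin n → Bool) → Bool) : hcVar n f = wGe n (toReal f) 1 := by
  have toReal_sq : ∀ x, toReal f x ^ 2 = toReal f x := fun x => by
    cases h : f x <;> simp [toReal, h]
  have mean_eq_sum : hcExp n (toReal f) = ∑ S : Finset (Fin n), fcoef n (toReal f) S ^ 2 := by
    rw [← parseval]
    simp only [toReal_sq]
  have fcoef_empty : fcoef n (toReal f) ∅ = hcExp n (toReal f) := by
    simp only [fcoef, chi_empty, mul_one]
  have univ_erase : univ.erase ∅ = ({S | 1 ≤ S.card} : Finset (Finset (Fin n))) := by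
    ext S
    simp [Nat.one_le_iff_ne_zero]
  rw [← add_sum_erase univ _ (mem_univ ∅), fcoef_empty, univ_erase] at mean_eq_sum
  rw [hcVar, wGe]
  linarith

lemma hcVar_nonneg (f : (Fin n → Bool) → Bool) : 0 ≤ hcVar n f := by
  rw [hcVar_eq_wGe_one]
  exact sum_nonneg fun S _ => sq_nonneg _

lemma hcVar_le_one (f : (Fin n → Bool) → Bool) : hcVar n f ≤ 1 := by
  unfold hcVar
  nlinarith [sq_nonneg (hcExp n (toReal f) - 1 / 2)]

lemma derivOn_toReal_sq (f : (Fin n → Bool) → Bool) (i : Fin n) (x : Fin n → Bool) :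
    derivOn (toReal f) i x ^ 2 = if f (hcFlip x i) = f x then 0 else 1 := by
  rw [derivOn_eq, mul_pow, pow_two (chi _ _), chi_mul_self, one_mul]
  cases h : f x <;> cases h' : f (hcFlip x i) <;> simp [toReal, h, h']

lemma derivOn_toReal_pow_three (f : (Fin n → Bool) → Bool) (i : Fin n) (x : Fin n → Bool) :
    derivOn (toReal f) i x ^ 3 = derivOn (toReal f) i x := by
  have := derivOn_toReal_sq f i x
  split_ifs at this with h
  · rw [pow_eq_zero_iff two_ne_zero] at this
    rw [this]; norm_num
  · rw [pow_succ, this, one_mul]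

lemma influence_eq (f : (Fin n → Bool) → Bool) (i : Fin n) :
    influence n f i = hcExp n (fun x => derivOn (toReal f) i x ^ 2) := by
  simp only [influence, derivOn_toReal_sq]

lemma influence_nonneg (f : (Fin n → Bool) → Bool) (i : Fin n) : 0 ≤ influence n f i := by
  rw [influence_eq]
  exact hcExp_nonneg fun x => sq_nonneg _

lemma sum_derivOn_toReal_sq (f : (Fin n → Bool) → Bool) (x : Fin n → Bool) :
    ∑ i, derivOn (toReal f) i x ^ 2 = sens f x := by
  simp [derivOn_toReal_sq, sens, card_filter, ite_not]

lemma gradNorm2_toReal (f : (Fin n → Bool) → Bool) (x : Fin n → Bool) :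
    gradNorm2 (toReal f) x = √(sens f x) := by
  rw [gradNorm2, sum_derivOn_toReal_sq]

lemma hcExp_sens (f : (Fin n → Bool) → Bool) :
    hcExp n (fun x => (sens f x : ℝ)) = ∑ i, influence n f i := by
  simp only [← sum_derivOn_toReal_sq, influence_eq, hcExp_sum]

lemma hcVar_le (f : (Fin n → Bool) → Bool) {M : ℝ} (hM : ∀ i, influence n f i ≤ M) {d : ℕ}
    (hd : 1 ≤ d) :
    hcVar n f ≤ 2 * hcExp n (fun x => √(sens f x)) / √d +
      3 ^ d / 4 * √M * ∑ i, influence n f i := by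
  have low_degree : ∑ i, noiseStability (1 / 3) (derivOn (toReal f) i) ≤
      √M * ∑ i, influence n f i := by
    rw [mul_sum]
    refine sum_le_sum fun i _ => ?_
    calc noiseStability (1 / 3) (derivOn (toReal f) i)
        ≤ influence n f i * √(influence n f i) := by
          rw [influence_eq]
          exact noiseStability_third_le (derivOn_toReal_pow_three f i)
      _ ≤ √M * influence n f i := by
          rw [mul_comm]
          gcongr
          · exact influence_nonneg f i
          · exact hM i
  calc hcVar n f ≤ wGe n (toReal f) d +
        3 ^ d / 4 * ∑ i, noiseStability (1 / 3) (derivOn (toReal f) i) := by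
        rw [hcVar_eq_wGe_one]
        exact wGe_one_le _ d
    _ ≤ 2 * hcExp n (gradNorm2 (toReal f)) / √d +
          3 ^ d / 4 * (√M * ∑ i, influence n f i) := by
        gcongr
        exact wGe_le (abs_toReal_le_one f) hd
    _ = _ := by
        simp only [funext (gradNorm2_toReal f), mul_assoc]

lemma hcVar_le_two_mul_hcExp_sqrt_sens (f : (Fin n → Bool) → Bool) :
    hcVar n f ≤ 2 * hcExp n (fun x => √(sens f x)) := by
  rw [hcVar_eq_wGe_one]
  simpa [funext (gradNorm2_toReal f)] using wGe_le (abs_toReal_le_one f) le_rfl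

lemma sum_influence_le {f : (Fin n → Bool) → Bool} {M : ℝ} (hn : n ≠ 0)
    (hM : ∀ i, influence n f i ≤ M / n) : ∑ i, influence n f i ≤ M := by
  calc ∑ i, influence n f i ≤ ∑ _i : Fin n, M / n := sum_le_sum fun i _ => hM i
    _ = M := by
        rw [sum_const, card_univ, Fintype.card_fin, nsmul_eq_mul,
          mul_div_cancel₀ _ (Nat.cast_ne_zero.2 hn)]

lemma hcExp_sqrt_sens_sq_le {f : (Fin n → Bool) → Bool} {M : ℝ} (hn : n ≠ 0)
    (hM : ∀ i, influence n f i ≤ M / n) : hcExp n (fun x => √(sens f x) ^ 2) ≤ M := by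
  simpa only [Real.sq_sqrt (Nat.cast_nonneg _), hcExp_sens] using sum_influence_le hn hM

end

lemma three_pow_ceil_le {t : ℝ} (ht : 0 ≤ t) : (3 : ℝ) ^ ⌈t⌉₊ ≤ 3 * Real.exp (2 * t) := by
  have three_le_exp : (3 : ℝ) ≤ Real.exp 2 := by linarith [Real.add_one_le_exp (2 : ℝ)]
  calc (3 : ℝ) ^ ⌈t⌉₊ = 3 ^ (⌈t⌉₊ : ℝ) := (Real.rpow_natCast _ _).symm
    _ ≤ 3 ^ (t + 1) :=
        Real.rpow_le_rpow_of_exponent_le (by norm_num) (Nat.ceil_lt_add_one ht).le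
    _ = 3 * 3 ^ t := by rw [Real.rpow_add_one three_ne_zero, mul_comm]
    _ ≤ 3 * Real.exp 2 ^ t := by gcongr
    _ = 3 * Real.exp (2 * t) := by rw [← Real.exp_mul]

lemma eventually_three_pow_ceil_log_mul_le {K : ℝ} (hK : 0 < K) :
    ∀ᶠ n : ℕ in Filter.atTop,
      3 ^ ⌈Real.log n / 8⌉₊ * (√(K * Real.log n / n) * (K * Real.log n)) ≤ 2 := by
  have log_pow_isLittleO := (Real.isLittleO_pow_log_id_atTop (n := 6)).comp_tendsto
    (tendsto_natCast_atTop_atTop (R := ℝ))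
  filter_upwards [log_pow_isLittleO.bound (c := 16 / (81 * K ^ 6)) (by positivity),
    Filter.eventually_ge_atTop 1] with n log_pow_le hn
  have hn₀ : (0 : ℝ) < n := mod_cast hn
  set L := Real.log n with L_def
  have hL : 0 ≤ L := Real.log_natCast_nonneg n
  have log_pow_le : 81 * K ^ 6 * L ^ 6 ≤ 16 * n := by
    simp only [Function.comp_apply, id, norm_pow, Real.norm_of_nonneg hL, ← L_def,
      Real.norm_of_nonneg hn₀.le, div_mul_eq_mul_div] at log_pow_le
    rw [le_div_iff₀ (by positivity)] at log_pow_le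
    linarith
  have exp_pow_four : Real.exp (2 * (L / 8)) ^ 4 = n := by
    rw [← Real.exp_nat_mul, show ((4 : ℕ) : ℝ) * (2 * (L / 8)) = L by push_cast; ring,
      Real.exp_log hn₀]
  have sqrt_pow_four : √(K * L / n) ^ 4 = (K * L / n) ^ 2 := by
    rw [show 4 = 2 * 2 from rfl, pow_mul, Real.sq_sqrt (by positivity)]
  refine le_of_pow_le_pow_left₀ four_ne_zero zero_le_two ?_
  calc (3 ^ ⌈L / 8⌉₊ * (√(K * L / n) * (K * L))) ^ 4
      ≤ (3 * Real.exp (2 * (L / 8)) * (√(K * L / n) * (K * L))) ^ 4 := by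
        gcongr
        exact three_pow_ceil_le (by positivity)
    _ = 81 * K ^ 6 * L ^ 6 / n := by
        simp only [mul_pow, exp_pow_four, sqrt_pow_four, div_pow]
        field_simp
        ring
    _ ≤ 2 ^ 4 := by
        rw [div_le_iff₀ hn₀]
        linarith

lemma hcVar_mul_sqrt_log_le {K : ℝ} (hK : 0 < K) {n : ℕ} (hn : 2 ≤ n)
    (small : 3 ^ ⌈Real.log n / 8⌉₊ * (√(K * Real.log n / n) * (K * Real.log n)) ≤ 2)
    {f : (Fin n → Bool) → Bool}
    (hf : ∀ i, influence n f i ≤ K * hcVar n f * Real.log n / n) :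
    hcVar n f * √(Real.log n) ≤ 4 * √8 * hcExp n (fun x => √(sens f x)) := by
  set V := hcVar n f
  set L := Real.log n
  set A := hcExp n (fun x => √(sens f x))
  set d := ⌈L / 8⌉₊
  have hV : 0 ≤ V := hcVar_nonneg f
  have hL : 0 < L := Real.log_pos (mod_cast hn)
  have hd : 0 < d := Nat.ceil_pos.2 (by positivity)
  have max_influence : ∀ i, influence n f i ≤ K * L / n := fun i => (hf i).trans (by
    gcongr
    exact mul_le_of_le_one_right hK.le (hcVar_le_one f))
  have low_degree : 3 ^ d / 4 * √(K * L / n) * ∑ i, influence n f i ≤ V / 2 := by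
    calc 3 ^ d / 4 * √(K * L / n) * ∑ i, influence n f i
        ≤ 3 ^ d / 4 * √(K * L / n) * (K * V * L) := by
          gcongr
          exact sum_influence_le (by omega) hf
      _ = V / 4 * (3 ^ d * (√(K * L / n) * (K * L))) := by ring
      _ ≤ V / 4 * 2 := by gcongr
      _ = V / 2 := by ring
  have high_degree : V ≤ 4 * A / √d := by
    have : 4 * A / √d = 2 * (2 * A / √d) := by ring
    linarith [hcVar_le f max_influence hd]
  calc V * √L = √8 * (V * √(L / 8)) := by
        rw [Real.sqrt_div hL.le]
        field_simp
    _ ≤ √8 * (V * √d) := by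
        gcongr
        exact Nat.le_ceil _
    _ ≤ √8 * (4 * A) :=
        mul_le_mul_of_nonneg_left ((le_div_iff₀ (by positivity)).1 high_degree)
          (Real.sqrt_nonneg _)
    _ = 4 * √8 * A := by ring

lemma exists_hcVar_mul_sqrt_log_le {K : ℝ} (hK : 0 < K) :
    ∃ C : ℝ, 0 < C ∧ ∀ n : ℕ, 2 ≤ n → ∀ f : (Fin n → Bool) → Bool,
      (∀ i, influence n f i ≤ K * hcVar n f * Real.log n / n) →
        hcVar n f * √(Real.log n) ≤ C * hcExp n (fun x => √(sens f x)) := by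
  obtain ⟨N, hN⟩ := Filter.eventually_atTop.1 (eventually_three_pow_ceil_log_mul_le hK)
  refine ⟨max (4 * √8) (2 * √(Real.log N)), lt_max_of_lt_left (by positivity),
    fun n hn f hf => ?_⟩
  have hA : 0 ≤ hcExp n (fun x => √(sens f x)) := hcExp_nonneg fun x => Real.sqrt_nonneg _
  rcases le_total N n with hNn | hnN
  · calc hcVar n f * √(Real.log n) ≤ 4 * √8 * hcExp n (fun x => √(sens f x)) :=
          hcVar_mul_sqrt_log_le hK hn (hN n hNn) hf
      _ ≤ _ := by gcongr; exact le_max_left _ _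
  · calc hcVar n f * √(Real.log n)
        ≤ 2 * hcExp n (fun x => √(sens f x)) * √(Real.log N) := by
          gcongr
          exact hcVar_le_two_mul_hcExp_sqrt_sens f
      _ = 2 * √(Real.log N) * hcExp n (fun x => √(sens f x)) := by ring
      _ ≤ _ := by gcongr; exact le_max_right _ _

theorem kkl_stability (K : ℝ) (hK : 0 < K) :
    ∃ c δ : ℝ, 0 < c ∧ 0 < δ ∧
      ∀ (n : ℕ), 2 ≤ n →
        ∀ f : (Fin n → Bool) → Bool,
          (∀ i : Fin n, influence n f i ≤ K * hcVar n f * Real.log n / n) →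
          hcExp n (fun x =>
              if Real.sqrt (sens f x) ≥ c * hcVar n f * Real.sqrt (Real.log n)
              then 1 else 0) ≥ δ * hcVar n f := by
  obtain ⟨C, hC, mean_bound⟩ := exists_hcVar_mul_sqrt_log_le hK
  refine ⟨1 / (2 * C), 1 / (4 * C ^ 2 * K), by positivity, by positivity, fun n hn f hf => ?_⟩
  rcases (hcVar_nonneg f).eq_or_lt with hV | hV
  · simp only [← hV, mul_zero, zero_mul]
    exact hcExp_nonneg fun x => by split_ifs <;> norm_num
  have hL : 0 < Real.log n := Real.log_pos (mod_cast hn)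
  set θ := 1 / (2 * C) * hcVar n f * √(Real.log n) with θ_def
  have mean : 2 * θ ≤ hcExp n (fun x => √(sens f x)) := by
    rw [show 2 * θ = hcVar n f * √(Real.log n) / C by rw [θ_def]; field_simp, div_le_iff₀' hC]
    exact mean_bound n hn f hf
  have θ_sq : θ ^ 2 = K * hcVar n f * Real.log n * (1 / (4 * C ^ 2 * K) * hcVar n f) := by
    rw [θ_def, mul_pow, Real.sq_sqrt hL.le]
    field_simp
    norm_num
  have tail := sq_le_mul_hcExp_tail (by positivity) mean (hcExp_sqrt_sens_sq_le (by omega) hf)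
  rw [θ_sq] at tail
  exact le_of_mul_le_mul_left tail (by positivity)

end
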